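/- If A₀, A₁ are ±1-outcome observables (Hermitian, squaring to identity) on H_A, B₀, B₁ on H_B, and a unit vector |ψ⟩ ∈ H_A⊗H_B satisfies ⟨ψ|S|ψ⟩ = 2√2 where S = A₀⊗B₀ + A₀⊗B₁ + A₁⊗B₀ − A₁⊗B₁, then the anticommutator {A₀,A₁} annihilates the reduced state: ⟨ψ|({A₀,A₁}² ⊗ I)|ψ⟩ = 0, i.e. (A₀A₁ + A₁A₀)⊗I |ψ⟩ = 0. -/

import Mathlib

open Matrix Kronecker

noncomputable section

/-!
For a CHSH tuple with CHSH operator `S`, Tsirelson's bound `S ≤ 2√2` follows from the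
sum-of-squares identity `P² + Q² = 8 - 2√2 S`, where `P = A₀ + A₁ - √2 B₀` and
`Q = A₀ - A₁ - √2 B₁`. A state `ψ` attaining the bound therefore satisfies `P ψ = 0`. As `B₀`
commutes with `A₀` and `A₁`, the difference of squares `(A₀ + A₁)² - 2 B₀²` factors through `P`,
and it equals `{A₀, A₁}` because all the observables square to the identity.
-/

section Algebra

/-- The CHSH operator `S` of the observables `A₀, A₁` of one party and `B₀, B₁` of the other. The
two parties act on a common space, so for a bipartite system `Aᵢ` stands for `Aᵢ ⊗ I` and `Bⱼ`
for `I ⊗ Bⱼ`. -/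
def chshOperator {R : Type*} [NonUnitalNonAssocRing R] (A₀ A₁ B₀ B₁ : R) : R :=
  A₀ * B₀ + A₀ * B₁ + A₁ * B₀ - A₁ * B₁

lemma map_chshOperator {R S F : Type*} [NonUnitalNonAssocRing R] [NonUnitalNonAssocRing S]
    [FunLike F R S] [NonUnitalRingHomClass F R S] (f : F) (A₀ A₁ B₀ B₁ : R) :
    f (chshOperator A₀ A₁ B₀ B₁) = chshOperator (f A₀) (f A₁) (f B₀) (f B₁) := by
  simp only [chshOperator, map_add, map_sub, map_mul]

lemma isCHSHTuple_map {R S F : Type*} [Monoid R] [StarMul R] [Monoid S] [StarMul S]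
    [FunLike F R S] [MonoidHomClass F R S] [StarHomClass F R S] (f : F) {A₀ A₁ B₀ B₁ : R}
    (T : IsCHSHTuple A₀ A₁ B₀ B₁) : IsCHSHTuple (f A₀) (f A₁) (f B₀) (f B₁) where
  A₀_inv := by rw [← map_pow, T.A₀_inv, map_one]
  A₁_inv := by rw [← map_pow, T.A₁_inv, map_one]
  B₀_inv := by rw [← map_pow, T.B₀_inv, map_one]
  B₁_inv := by rw [← map_pow, T.B₁_inv, map_one]
  A₀_sa := by rw [← map_star, T.A₀_sa]
  A₁_sa := by rw [← map_star, T.A₁_sa]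
  B₀_sa := by rw [← map_star, T.B₀_sa]
  B₁_sa := by rw [← map_star, T.B₁_sa]
  A₀B₀_commutes := by rw [← map_mul, T.A₀B₀_commutes, map_mul]
  A₀B₁_commutes := by rw [← map_mul, T.A₀B₁_commutes, map_mul]
  A₁B₀_commutes := by rw [← map_mul, T.A₁B₀_commutes, map_mul]
  A₁B₁_commutes := by rw [← map_mul, T.A₁B₁_commutes, map_mul]

variable {k R : Type*} [CommRing k] [Ring R] [Algebra k R]

lemma sq_add_sq_eq_sub_smul_chshOperator [StarMul R] {A₀ A₁ B₀ B₁ : R}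
    (T : IsCHSHTuple A₀ A₁ B₀ B₁) {s : k} (hs : s ^ 2 = 2) :
    (A₀ + A₁ - s • B₀) ^ 2 + (A₀ - A₁ - s • B₁) ^ 2 =
      (8 : k) • (1 : R) - (2 * s) • chshOperator A₀ A₁ B₀ B₁ := by
  simp only [chshOperator, sq, mul_add, add_mul, mul_sub, sub_mul, smul_mul_assoc, mul_smul_comm,
    ← T.A₀B₀_commutes, ← T.A₀B₁_commutes, ← T.A₁B₀_commutes, ← T.A₁B₁_commutes]
  simp only [← sq, T.A₀_inv, T.A₁_inv, T.B₀_inv, T.B₁_inv]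
  linear_combination (norm := module) (2 : k) • hs • (1 : R)

lemma anticommutator_eq_mul_sub_smul {A₀ A₁ B : R} (hA₀ : A₀ ^ 2 = 1) (hA₁ : A₁ ^ 2 = 1)
    (hB : B ^ 2 = 1) (hA₀B : Commute A₀ B) (hA₁B : Commute A₁ B) {s : k} (hs : s ^ 2 = 2) :
    A₀ * A₁ + A₁ * A₀ = (A₀ + A₁ + s • B) * (A₀ + A₁ - s • B) := by
  have hcomm : Commute (A₀ + A₁) (s • B) := (hA₀B.add_left hA₁B).smul_right s
  rw [← hcomm.sq_sub_sq, smul_pow, hB, hs, sq, add_mul, mul_add, mul_add, ← sq, ← sq, hA₀, hA₁]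
  module

end Algebra

section Hilbert

open scoped InnerProductSpace

lemma ofReal_sqrt_two_sq (𝕜 : Type*) [RCLike 𝕜] : ((√2 : ℝ) : 𝕜) ^ 2 = 2 := by
  norm_cast
  exact Real.sq_sqrt zero_le_two

variable {𝕜 H : Type*} [RCLike 𝕜] [NormedAddCommGroup H] [InnerProductSpace 𝕜 H] [CompleteSpace H]

lemma inner_sq_apply_self_of_isSelfAdjoint {P : H →L[𝕜] H} (hP : IsSelfAdjoint P) (x : H) :
    ⟪x, (P ^ 2) x⟫_𝕜 = (‖P x‖ : 𝕜) ^ 2 := by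
  rw [sq P, mul_apply_eq_comp, ← hP.isSymmetric.apply_clm, inner_self_eq_norm_sq_to_K]

lemma inner_sq_add_sq_apply_self_eq_zero_iff {P Q : H →L[𝕜] H} (hP : IsSelfAdjoint P)
    (hQ : IsSelfAdjoint Q) {x : H} : ⟪x, (P ^ 2 + Q ^ 2) x⟫_𝕜 = 0 ↔ P x = 0 ∧ Q x = 0 := by
  rw [_root_.add_apply, inner_add_right, inner_sq_apply_self_of_isSelfAdjoint hP,
    inner_sq_apply_self_of_isSelfAdjoint hQ]
  norm_cast
  rw [add_eq_zero_iff_of_nonneg (sq_nonneg _) (sq_nonneg _)]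
  simp only [sq_eq_zero_iff, norm_eq_zero]

lemma add_sub_sqrt_two_smul_apply_eq_zero {A₀ A₁ B₀ B₁ : H →L[𝕜] H}
    (T : IsCHSHTuple A₀ A₁ B₀ B₁) {ψ : H}
    (hmax : ⟪ψ, chshOperator A₀ A₁ B₀ B₁ ψ⟫_𝕜 = (2 * √2 : ℝ) * ⟪ψ, ψ⟫_𝕜) :
    (A₀ + A₁ - ((√2 : ℝ) : 𝕜) • B₀) ψ = 0 := by
  have hs_sa : IsSelfAdjoint ((√2 : ℝ) : 𝕜) := RCLike.conj_ofReal _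
  have hP : IsSelfAdjoint (A₀ + A₁ - ((√2 : ℝ) : 𝕜) • B₀) :=
    (IsSelfAdjoint.add T.A₀_sa T.A₁_sa).sub (hs_sa.smul T.B₀_sa)
  have hQ : IsSelfAdjoint (A₀ - A₁ - ((√2 : ℝ) : 𝕜) • B₁) :=
    (IsSelfAdjoint.sub T.A₀_sa T.A₁_sa).sub (hs_sa.smul T.B₁_sa)
  refine ((inner_sq_add_sq_apply_self_eq_zero_iff hP hQ).1 ?_).1
  rw [sq_add_sq_eq_sub_smul_chshOperator T (ofReal_sqrt_two_sq 𝕜), _root_.sub_apply,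
    _root_.smul_apply, _root_.smul_apply, one_apply_eq_self, inner_sub_right, inner_smul_right,
    inner_smul_right, hmax]
  push_cast
  linear_combination (-4 * ⟪ψ, ψ⟫_𝕜) * ofReal_sqrt_two_sq 𝕜

theorem maximal_chsh_violation_anticommutation_general {A₀ A₁ B₀ B₁ : H →L[𝕜] H}
    (T : IsCHSHTuple A₀ A₁ B₀ B₁) {ψ : H}
    (hmax : ⟪ψ, chshOperator A₀ A₁ B₀ B₁ ψ⟫_𝕜 = (2 * √2 : ℝ) * ⟪ψ, ψ⟫_𝕜) :
    (A₀ * A₁ + A₁ * A₀) ψ = 0 := by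
  rw [anticommutator_eq_mul_sub_smul T.A₀_inv T.A₁_inv T.B₀_inv T.A₀B₀_commutes T.A₁B₀_commutes
    (ofReal_sqrt_two_sq 𝕜), mul_apply_eq_comp, add_sub_sqrt_two_smul_apply_eq_zero T hmax, map_zero]

end Hilbert

section Matrices

variable {𝕜 m n : Type*} [RCLike 𝕜] [Fintype m] [DecidableEq m] [Fintype n] [DecidableEq n]

lemma anticommutator_mulVec_eq_zero_of_chshOperator {A₀ A₁ B₀ B₁ : Matrix n n 𝕜}
    (T : IsCHSHTuple A₀ A₁ B₀ B₁) {ψ : n → 𝕜}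
    (hmax : star ψ ⬝ᵥ (chshOperator A₀ A₁ B₀ B₁ *ᵥ ψ) = (2 * √2 : ℝ) * (star ψ ⬝ᵥ ψ)) :
    (A₀ * A₁ + A₁ * A₀) *ᵥ ψ = 0 := by
  have h := maximal_chsh_violation_anticommutation_general
    (isCHSHTuple_map (toEuclideanCLM (n := n) (𝕜 := 𝕜)) T) (ψ := WithLp.toLp 2 ψ) (by
      rwa [← map_chshOperator, toEuclideanCLM_toLp, EuclideanSpace.inner_toLp_toLp,
        EuclideanSpace.inner_toLp_toLp, dotProduct_comm, dotProduct_comm ψ])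
  rwa [← map_mul, ← map_mul, ← map_add, toEuclideanCLM_toLp, WithLp.toLp_eq_zero] at h

lemma isCHSHTuple_kronecker {R : Type*} [CommRing R] [StarRing R]
    {A₀ A₁ : Matrix m m R} {B₀ B₁ : Matrix n n R}
    (hA₀ : A₀.IsHermitian) (hA₁ : A₁.IsHermitian) (hB₀ : B₀.IsHermitian) (hB₁ : B₁.IsHermitian)
    (hA₀sq : A₀ * A₀ = 1) (hA₁sq : A₁ * A₁ = 1) (hB₀sq : B₀ * B₀ = 1) (hB₁sq : B₁ * B₁ = 1) :
    IsCHSHTuple (A₀ ⊗ₖ (1 : Matrix n n R)) (A₁ ⊗ₖ (1 : Matrix n n R))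
      ((1 : Matrix m m R) ⊗ₖ B₀) ((1 : Matrix m m R) ⊗ₖ B₁) := by
  constructor <;>
    simp only [sq, star_eq_conjTranspose, conjTranspose_kronecker, ← mul_kronecker_mul, mul_one,
      one_mul, conjTranspose_one, one_kronecker_one, hA₀.eq, hA₁.eq, hB₀.eq, hB₁.eq,
      hA₀sq, hA₁sq, hB₀sq, hB₁sq]

lemma chshOperator_kronecker {R : Type*} [CommRing R] (A₀ A₁ : Matrix m m R)
    (B₀ B₁ : Matrix n n R) :
    chshOperator (A₀ ⊗ₖ (1 : Matrix n n R)) (A₁ ⊗ₖ (1 : Matrix n n R))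
      ((1 : Matrix m m R) ⊗ₖ B₀) ((1 : Matrix m m R) ⊗ₖ B₁) =
      A₀ ⊗ₖ B₀ + A₀ ⊗ₖ B₁ + A₁ ⊗ₖ B₀ - A₁ ⊗ₖ B₁ := by
  simp only [chshOperator, ← mul_kronecker_mul, mul_one, one_mul]

end Matrices

/-- If a unit vector `ψ` attains the Tsirelson bound `⟨ψ|S|ψ⟩ = 2√2` for the CHSH operator
`S`, then the anticommutator `{A₀,A₁}` annihilates the state:
`({A₀,A₁} ⊗ I)|ψ⟩ = 0`, i.e. `⟨ψ|({A₀,A₁}² ⊗ I)|ψ⟩ = 0`. -/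
theorem maximal_chsh_violation_anticommutation {nA nB : ℕ}
    (A₀ A₁ : Matrix (Fin nA) (Fin nA) ℂ) (B₀ B₁ : Matrix (Fin nB) (Fin nB) ℂ)
    (hA₀ : A₀.IsHermitian) (hA₁ : A₁.IsHermitian)
    (hB₀ : B₀.IsHermitian) (hB₁ : B₁.IsHermitian)
    (hA₀sq : A₀ * A₀ = 1) (hA₁sq : A₁ * A₁ = 1)
    (hB₀sq : B₀ * B₀ = 1) (hB₁sq : B₁ * B₁ = 1)
    (ψ : Fin nA × Fin nB → ℂ) (hψ : star ψ ⬝ᵥ ψ = 1)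
    (hmax : star ψ ⬝ᵥ ((A₀ ⊗ₖ B₀ + A₀ ⊗ₖ B₁ + A₁ ⊗ₖ B₀ - A₁ ⊗ₖ B₁) *ᵥ ψ) =
      ((2 * Real.sqrt 2 : ℝ) : ℂ)) :
    ((A₀ * A₁ + A₁ * A₀) ⊗ₖ (1 : Matrix (Fin nB) (Fin nB) ℂ)) *ᵥ ψ = 0 ∧
    star ψ ⬝ᵥ ((((A₀ * A₁ + A₁ * A₀) * (A₀ * A₁ + A₁ * A₀)) ⊗ₖ
      (1 : Matrix (Fin nB) (Fin nB) ℂ)) *ᵥ ψ) = 0 := by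
  have T := isCHSHTuple_kronecker hA₀ hA₁ hB₀ hB₁ hA₀sq hA₁sq hB₀sq hB₁sq
  have hanti : ((A₀ * A₁ + A₁ * A₀) ⊗ₖ (1 : Matrix (Fin nB) (Fin nB) ℂ)) *ᵥ ψ = 0 := by
    have h := anticommutator_mulVec_eq_zero_of_chshOperator T (ψ := ψ) (by
      rw [chshOperator_kronecker, hψ, mul_one]
      exact hmax)
    simpa only [← mul_kronecker_mul, mul_one, ← add_kronecker] using h
  refine ⟨hanti, ?_⟩
  rw [← mul_one (1 : Matrix (Fin nB) (Fin nB) ℂ), mul_kronecker_mul, ← mulVec_mulVec, hanti,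
    mulVec_zero, dotProduct_zero]
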